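/- arXiv:1002.2925 — 9 statements merged into one kernel-verified Lean document; each statement's English description precedes it below -/
import Mathlib

section
/- Suppose there exists a twice differentiable function φ : [0,L] → ℝ with φ(x) > 0 on [0,L], Lφ(x) > 0 on [0,L], and Dφ > 0. Then the maximum principle holds for L: for every twice differentiable function ψ : [0,L] → ℝ satisfying Lψ(x) ≥ 0 on [0,L], Dψ ≥ 0, and ψ(0) ≥ 0, one has ψ(x) ≥ 0 for all x ∈ [0,L]. -/
open Set

/-- Maximum principle for the operator `L u x = -ε u'' x + a x * u' x + c x * u x`
with boundary functional `D u = ε u' L + d * u L`, given a positive barrier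
function `φ` with `L φ > 0` on `[0, L]` and `D φ > 0`. -/
theorem statement0 (L ε d : ℝ) (hL : 0 < L) (hε : 0 < ε)
    (a c : ℝ → ℝ)
    (ha : ContinuousOn a (Icc 0 L)) (hc : ContinuousOn c (Icc 0 L))
    (φ : ℝ → ℝ)
    (hφdiff : ∀ x ∈ Icc 0 L, DifferentiableAt ℝ φ x)
    (hφdiff2 : ∀ x ∈ Icc 0 L, DifferentiableAt ℝ (deriv φ) x)
    (hφpos : ∀ x ∈ Icc 0 L, 0 < φ x)
    (hLφ : ∀ x ∈ Icc 0 L,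
      0 < -ε * deriv (deriv φ) x + a x * deriv φ x + c x * φ x)
    (hDφ : 0 < ε * deriv φ L + d * φ L) :
    ∀ ψ : ℝ → ℝ,
      (∀ x ∈ Icc 0 L, DifferentiableAt ℝ ψ x) →
      (∀ x ∈ Icc 0 L, DifferentiableAt ℝ (deriv ψ) x) →
      (∀ x ∈ Icc 0 L,
        0 ≤ -ε * deriv (deriv ψ) x + a x * deriv ψ x + c x * ψ x) →
      0 ≤ ε * deriv ψ L + d * ψ L →
      0 ≤ ψ 0 →
      ∀ x ∈ Icc 0 L, 0 ≤ ψ x := by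
  intro ψ hψ1 hψ2 hLψ hDψ hψ0 y hy
  by_contra hneg
  rw [not_le] at hneg
  obtain ⟨x, hx, hmin⟩ := isCompact_Icc.exists_isMinOn (f := fun t => ψ t / φ t) ⟨y, hy⟩
    (fun t ht => ((hψ1 t ht).continuousAt.div (hφdiff t ht).continuousAt
      (hφpos t ht).ne').continuousWithinAt)
  have hmin' : ∀ t ∈ Icc 0 L, ψ x / φ x ≤ ψ t / φ t := fun t ht => hmin ht
  obtain ⟨k, hk⟩ : ∃ k, k = -(ψ x / φ x) := ⟨_, rfl⟩
  have hkpos : 0 < k := by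
    have h1 := hmin' y hy
    have h2 : ψ y / φ y < 0 := div_neg_of_neg_of_pos hneg (hφpos y hy)
    linarith
  have hw : ∀ t ∈ Icc 0 L, 0 ≤ ψ t + k * φ t := by
    intro t ht
    have h1 : -k ≤ ψ t / φ t := by rw [hk, neg_neg]; exact hmin' t ht
    rw [le_div_iff₀ (hφpos t ht)] at h1
    linarith
  have hwx : ψ x + k * φ x = 0 := by
    have := (hφpos x hx).ne'
    rw [hk]; field_simp; ring
  have hd : ∀ t ∈ Icc 0 L, HasDerivAt (fun t => ψ t + k * φ t) (deriv ψ t + k * deriv φ t) t :=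
    fun t ht => (hψ1 t ht).hasDerivAt.add ((hφdiff t ht).hasDerivAt.const_mul k)
  have hx0 : 0 < x := by
    rcases hx.1.lt_or_eq with h | h
    · exact h
    · subst h
      have := mul_pos hkpos (hφpos 0 hx)
      linarith
  rcases hx.2.lt_or_eq with hxL | hxL
  · have hnhds : Icc 0 L ∈ nhds x := Icc_mem_nhds hx0 hxL
    have hlm : IsLocalMin (fun t => ψ t + k * φ t) x := by
      filter_upwards [hnhds] with t ht
      rw [hwx]; exact hw t ht
    have hz := hlm.hasDerivAt_eq_zero (hd x hx)
    have hev : deriv (fun t => ψ t + k * φ t) =ᶠ[nhds x] fun t => deriv ψ t + k * deriv φ t := by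
      filter_upwards [hnhds] with t ht
      exact (hd t ht).deriv
    have hdd : deriv (deriv (fun t => ψ t + k * φ t)) x
        = deriv (deriv ψ) x + k * deriv (deriv φ) x := by
      rw [hev.deriv_eq]
      exact ((hψ2 x hx).hasDerivAt.add ((hφdiff2 x hx).hasDerivAt.const_mul k)).deriv
    have h1 := hLψ x hx
    have h2 := mul_pos hkpos (hLφ x hx)
    have h3 : ε * (deriv (deriv ψ) x + k * deriv (deriv φ) x) < 0 := by
      have e : (-ε * deriv (deriv ψ) x + a x * deriv ψ x + c x * ψ x)
          + k * (-ε * deriv (deriv φ) x + a x * deriv φ x + c x * φ x)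
          = -(ε * (deriv (deriv ψ) x + k * deriv (deriv φ) x))
            + a x * (deriv ψ x + k * deriv φ x) + c x * (ψ x + k * φ x) := by ring
      rw [hz, hwx] at e
      linarith
    have h4 : deriv (deriv (fun t => ψ t + k * φ t)) x < 0 := by
      rw [hdd]; exact neg_of_mul_neg_right h3 hε.le
    have hlM := isLocalMax_of_deriv_deriv_neg h4 ((hd x hx).deriv.trans hz)
      (hd x hx).continuousAt
    have hcst : (fun t => ψ t + k * φ t) =ᶠ[nhds x] fun _ => (0 : ℝ) := by
      filter_upwards [hlm, hlM] with t ht1 ht2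
      have := le_antisymm ht2 ht1
      rw [← hwx]; exact this
    have h5 := hcst.deriv.deriv_eq
    simp at h5
    linarith
  · subst hxL
    have h2 := mul_pos hkpos hDφ
    have h3 : 0 < ε * (deriv ψ x + k * deriv φ x) := by
      have e : (ε * deriv ψ x + d * ψ x) + k * (ε * deriv φ x + d * φ x)
          = ε * (deriv ψ x + k * deriv φ x) + d * (ψ x + k * φ x) := by ring
      rw [hwx] at e
      linarith
    have h4 := pos_of_mul_pos_right h3 hε.le
    have hs := (hd x hx).hasDerivWithinAt (s := Iio x)
    rw [hasDerivWithinAt_iff_tendsto_slope' (by simp)] at hs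
    have h5 := hs.eventually (lt_mem_nhds h4)
    have h6 : Ioo 0 x ∈ nhdsWithin x (Iio x) := Ioo_mem_nhdsLT hx0
    obtain ⟨t, ht, htI⟩ := (h5.and h6).exists
    rw [slope_def_field, hwx, sub_zero] at ht
    have h7 := div_nonpos_of_nonneg_of_nonpos (hw t ⟨htI.1.le, htI.2.le⟩)
      (sub_nonpos.2 htI.2.le)
    linarith
end

section
/- If u : [0,L] → ℝ is a twice differentiable solution of the boundary value problem T_ε u = 0 on [0,L], u(0) = A, R_ε u = 0, then there exists a constant C > 0, depending only on α, β, γ, and L (independent of ε), such that sup_{x∈[0,L]} |u(x)| ≤ C (|A| + |g(0)| + |f(0)|). -/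
open Set

lemma aux_second (d : ℝ → ℝ) (x : ℝ) (h : IsLocalMax d x) (hc : ContinuousAt d x) :
    deriv (deriv d) x ≤ 0 := by
  by_contra hpos
  push Not at hpos
  have hmin := isLocalMin_of_deriv_deriv_pos hpos h.deriv_eq_zero hc
  have heq : d =ᶠ[nhds x] fun _ => d x := by
    filter_upwards [h, hmin] with y h1 h2 using le_antisymm h1 h2
  have h2 := heq.deriv.deriv_eq
  simp at h2
  linarith

lemma aux_upper (L α β γ : ℝ) (hL : 0 < L)
    (hα : 0 < α) (hβ : 0 < β) (hγ : 0 < γ) (ε : ℝ) (hε : 0 < ε) (a g f u : ℝ → ℝ)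
    (ha : ∀ x ∈ Icc 0 L, α ≤ a x)
    (hg : ∀ s, 0 ≤ s → g 0 - β * s ≤ g s) (hf : ∀ s, 0 ≤ s → f 0 ≤ f s)
    (hd : γ ≤ α ^ 2 - 4 * ε * β)
    (hu : ∀ x ∈ Icc 0 L, DifferentiableAt ℝ u x)
    (hu2 : ∀ x ∈ Icc 0 L, DifferentiableAt ℝ (deriv u) x)
    (he : ∀ x ∈ Icc 0 L, -ε * deriv (deriv u) x + a x * deriv u x + g (u x) = 0)
    (hR : ε * deriv u L + f (u L) = 0) :
    ∀ x ∈ Icc 0 L, u x ≤ (|u 0| + |g 0| * (α ^ 2 / (β * γ))) * Real.exp (2 * β / α * L)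
      + 2 / α * |f 0| := by
  set k := 2 * β / α with hk
  set m := α / (2 * ε) with hm
  set N := 2 / α * |f 0| with hN
  have hk0 : 0 < k := by positivity
  have hm0 : 0 < m := by positivity
  have hN0 : 0 ≤ N := by positivity
  have hkα : k * α = 2 * β := by rw [hk]; field_simp
  have hmε : ε * m = α / 2 := by rw [hm]; field_simp
  set M1 := |u 0| + |g 0| * (α ^ 2 / (β * γ)) with hM1
  have hM10 : 0 ≤ M1 := by positivity
  have huc : ContinuousOn u (Icc 0 L) := fun x hx => (hu x hx).continuousAt.continuousWithinAt
  obtain ⟨z, hz, hzm⟩ := isCompact_Icc.exists_isMaxOn (nonempty_Icc.2 hL.le)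
    (f := fun x => (u x - N * Real.exp (m * (x - L))) * Real.exp (-(k * x))) (by fun_prop)
  set M := (u z - N * Real.exp (m * (z - L))) * Real.exp (-(k * z)) with hM
  have hle : ∀ x ∈ Icc 0 L, u x ≤ M * Real.exp (k * x) + N * Real.exp (m * (x - L)) := by
    intro x hx
    have h1 : (u x - N * Real.exp (m * (x - L))) * Real.exp (-(k * x)) ≤ M := hzm hx
    have h2 := mul_le_mul_of_nonneg_right h1 (Real.exp_pos (k * x)).le
    rw [mul_assoc, ← Real.exp_add, neg_add_cancel, Real.exp_zero] at h2
    linarith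
  have hez : u z = M * Real.exp (k * z) + N * Real.exp (m * (z - L)) := by
    rw [hM, mul_assoc, ← Real.exp_add, neg_add_cancel, Real.exp_zero]
    ring
  have key : M ≤ M1 := by
    by_contra hlt
    push Not at hlt
    have hMpos : 0 < M := lt_of_le_of_lt hM10 hlt
    have hEz := Real.exp_pos (k * z)
    have hFz := Real.exp_pos (m * (z - L))
    have huz : 0 < u z := by rw [hez]; positivity
    set W : ℝ → ℝ := fun x => M * Real.exp (k * x) + N * Real.exp (m * (x - L)) with hW
    set W1 : ℝ → ℝ := fun x => M * (Real.exp (k * x) * k) + N * (Real.exp (m * (x - L)) * m) with hW1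
    have hE1 : ∀ x, HasDerivAt (fun x => Real.exp (k * x)) (Real.exp (k * x) * k) x := by
      intro x
      simpa using ((hasDerivAt_id x).const_mul k).exp
    have hE2 : ∀ x, HasDerivAt (fun x => Real.exp (m * (x - L))) (Real.exp (m * (x - L)) * m) x := by
      intro x
      simpa using (((hasDerivAt_id x).sub_const L).const_mul m).exp
    have hWd : ∀ x, HasDerivAt W (W1 x) x := fun x =>
      ((hE1 x).const_mul M).add ((hE2 x).const_mul N)
    have hW1d : ∀ x, HasDerivAt W1 (M * (Real.exp (k * x) * k * k) + N * (Real.exp (m * (x - L)) * m * m)) x :=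
      fun x => (((hE1 x).mul_const k).const_mul M).add (((hE2 x).mul_const m).const_mul N)
    have hz0 : z ≠ 0 := by
      intro h0
      have : u 0 = M + N * Real.exp (m * (0 - L)) := by
        rw [h0] at hez; simpa using hez
      have h3 : 0 ≤ N * Real.exp (m * (0 - L)) := by positivity
      have h4 : 0 ≤ |g 0| * (α ^ 2 / (β * γ)) := by positivity
      have := le_abs_self (u 0)
      linarith
    have hzpos : 0 < z := lt_of_le_of_ne hz.1 (Ne.symm hz0)
    rcases eq_or_lt_of_le hz.2 with hzL | hzL
    · -- boundary
      have hdd : HasDerivAt (fun x => u x - W x) (deriv u L - W1 L) L :=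
        (hu L ⟨hL.le, le_rfl⟩).hasDerivAt.sub (hWd L)
      have hge : 0 ≤ deriv u L - W1 L := by
        have ht := hdd.hasDerivWithinAt (s := Iio L)
        rw [hasDerivWithinAt_iff_tendsto_slope' (by simp)] at ht
        refine ge_of_tendsto ht ?_
        have : Ioo 0 L ∈ nhdsWithin L (Iio L) := Ioo_mem_nhdsLT hL
        filter_upwards [this] with y hy
        have h5 := hle y ⟨hy.1.le, hy.2.le⟩
        rw [slope_def_field]
        apply div_nonneg_of_nonpos
        · have : u L = W L := by rw [← hzL]; exact hez
          have : u y ≤ W y := h5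
          linarith
        · linarith [hy.2]
      have h6 := hf (u z) huz.le
      rw [hzL] at h6
      have h7 : ε * W1 L = ε * (M * (Real.exp (k * L) * k)) + N * (α / 2) := by
        rw [← hmε]; simp [hW1]; ring
      have h8 : N * (α / 2) = |f 0| := by rw [hN]; field_simp
      have h9 : 0 < ε * (M * (Real.exp (k * L) * k)) := by positivity
      have h10 := mul_nonneg hε.le hge
      have := neg_abs_le (f 0)
      nlinarith
    · have hnhds : Icc 0 L ∈ nhds z := Icc_mem_nhds hzpos hzL
      have hmax : IsLocalMax (fun x => u x - W x) z := by
        filter_upwards [hnhds] with y hy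
        have h5 : u y ≤ W y := hle y hy
        have h6 : u z = W z := hez
        linarith
      have hdz := (hu z hz).hasDerivAt.sub (hWd z)
      have hd1 : deriv u z - W1 z = 0 := hmax.hasDerivAt_eq_zero hdz
      have hev : deriv (fun x => u x - W x) =ᶠ[nhds z] fun x => deriv u x - W1 x := by
        filter_upwards [hnhds] with y hy
        exact ((hu y hy).hasDerivAt.sub (hWd y)).deriv
      have hd2 := aux_second _ z hmax hdz.continuousAt
      rw [hev.deriv_eq, ((hu2 z hz).hasDerivAt.fun_sub (hW1d z)).deriv] at hd2
      have e := he z hz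
      have hgz := hg (u z) huz.le
      have haz := ha z hz
      have hd1' : deriv u z = M * (Real.exp (k * z) * k) + N * (Real.exp (m * (z - L)) * m) := by
        linarith
      set E := Real.exp (k * z)
      set F := Real.exp (m * (z - L))
      have hE1' : 1 ≤ E := Real.one_le_exp (by positivity)
      have p1 : 0 ≤ deriv u z := by rw [hd1']; positivity
      have p2 : α * deriv u z ≤ a z * deriv u z := mul_le_mul_of_nonneg_right haz p1
      have p3 := mul_le_mul_of_nonneg_left hd2 hε.le
      -- residuals
      have c1 : β * γ / α ^ 2 ≤ -ε * k ^ 2 + α * k - β := by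
        have : -ε * k ^ 2 + α * k - β = β * (α ^ 2 - 4 * ε * β) / α ^ 2 := by
          rw [hk]; field_simp; ring
        rw [this]
        gcongr
      have c2 : 0 ≤ -ε * m ^ 2 + α * m - β := by
        have : -ε * m ^ 2 + α * m - β = (α ^ 2 - 4 * ε * β) / (4 * ε) := by
          rw [hm]; field_simp; ring
        rw [this]
        apply div_nonneg <;> linarith
      have c3 : |g 0| < M * (β * γ / α ^ 2) := by
        have h4 : |g 0| * (α ^ 2 / (β * γ)) < M := by
          have := abs_nonneg (u 0)
          linarith
        calc |g 0| = |g 0| * (α ^ 2 / (β * γ)) * (β * γ / α ^ 2) := by field_simp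
          _ < _ := mul_lt_mul_of_pos_right h4 (by positivity)
      have c4 : M * (β * γ / α ^ 2) ≤ M * E * (-ε * k ^ 2 + α * k - β) := by
        have : M ≤ M * E := le_mul_of_one_le_right hMpos.le hE1'
        exact mul_le_mul this c1 (by positivity) (by positivity)
      have c5 : 0 ≤ N * F * (-ε * m ^ 2 + α * m - β) := mul_nonneg (by positivity) c2
      have := neg_abs_le (g 0)
      rw [hd1'] at p2 e
      rw [hez] at hgz e
      linarith
  intro x hx
  refine (hle x hx).trans ?_
  have h1 : Real.exp (k * x) ≤ Real.exp (k * L) := Real.exp_le_exp.2 (by nlinarith [hx.2])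
  have h2 : Real.exp (m * (x - L)) ≤ 1 := Real.exp_le_one_iff.2 (by nlinarith [hx.2])
  have h3 : M * Real.exp (k * x) ≤ M1 * Real.exp (k * L) :=
    (mul_le_mul_of_nonneg_right key (Real.exp_pos _).le).trans (mul_le_mul_of_nonneg_left h1 hM10)
  have h4 : N * Real.exp (m * (x - L)) ≤ N := mul_le_of_le_one_right hN0 h2
  linarith


/-- Boundedness of solutions: there is `C > 0` depending only on `α, β, γ, L`
(independent of `ε`) such that any twice differentiable solution `u` of
`T_ε u = 0`, `u 0 = A`, `R_ε u = 0` satisfies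
`sup |u| ≤ C (|A| + |g 0| + |f 0|)`. -/
theorem statement5 (L α β γ : ℝ) (hL : 0 < L)
    (hα : 0 < α) (hβ : 0 < β) (hγ : 0 < γ) :
    ∃ C > (0 : ℝ), ∀ ε ∈ Ioc (0 : ℝ) 1, ∀ a g f : ℝ → ℝ,
      ContDiffOn ℝ 1 a (Icc 0 L) → (∀ x ∈ Icc 0 L, α ≤ a x) →
      ContDiff ℝ 2 g → (∀ s : ℝ, -β ≤ deriv g s) →
      ContDiff ℝ 1 f → (∀ s : ℝ, 0 ≤ deriv f s) →
      γ ≤ α ^ 2 - 4 * ε * β →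
      ∀ A : ℝ, ∀ u : ℝ → ℝ,
        (∀ x ∈ Icc 0 L, DifferentiableAt ℝ u x) →
        (∀ x ∈ Icc 0 L, DifferentiableAt ℝ (deriv u) x) →
        (∀ x ∈ Icc 0 L,
          -ε * deriv (deriv u) x + a x * deriv u x + g (u x) = 0) →
        u 0 = A →
        ε * deriv u L + f (u L) = 0 →
        ∀ x ∈ Icc 0 L, |u x| ≤ C * (|A| + |g 0| + |f 0|) := by
  set κ := α ^ 2 / (β * γ) with hκ
  have hκ0 : 0 < κ := by positivity
  set X := Real.exp (2 * β / α * L) with hX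
  have hX0 : 0 < X := Real.exp_pos _
  refine ⟨X + κ * X + 2 / α, by positivity, ?_⟩
  intro ε hε a g f _ ha hg hg' hf hf' hd A u hu hu2 he hA hR x hx
  have hfm : Monotone f := monotone_of_deriv_nonneg (hf.differentiable (by norm_num)) hf'
  have hgd : Differentiable ℝ g := hg.differentiable (by norm_num)
  have hgm : Monotone (fun s => g s + β * s) := by
    apply monotone_of_deriv_nonneg (by fun_prop)
    intro s
    have : HasDerivAt (fun s => g s + β * s) (deriv g s + β * 1) s :=
      (hgd s).hasDerivAt.add ((hasDerivAt_id s).const_mul β)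
    rw [this.deriv]
    linarith [hg' s]
  have up := aux_upper L α β γ hL hα hβ hγ ε hε.1 a g f u ha
    (fun s hs => by have := hgm hs; simp only at this; linarith) (fun s hs => hfm hs) hd hu hu2 he hR x hx
  have hdn : deriv (fun x => -u x) = fun x => -deriv u x := by
    funext y; exact deriv.fun_neg
  have hdn2 : deriv (fun x => -deriv u x) = fun x => -deriv (deriv u) x := by
    funext y; exact deriv.fun_neg
  have lo := aux_upper L α β γ hL hα hβ hγ ε hε.1 a (fun s => -g (-s)) (fun s => -f (-s))
    (fun x => -u x) ha
    (fun s hs => by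
      have := hgm (neg_nonpos.2 hs); simp only at this; simp only [neg_zero]; linarith)
    (fun s hs => by
      have := hfm (neg_nonpos.2 hs); simp only [neg_zero]; linarith) hd
    (fun y hy => (hu y hy).fun_neg)
    (fun y hy => by rw [hdn]; exact (hu2 y hy).fun_neg)
    (fun y hy => by
      rw [hdn, hdn2]; simp only [neg_neg]; linarith [he y hy])
    (by rw [hdn]; simp only [neg_neg]; linarith) x hx
  simp only [neg_zero, abs_neg] at lo
  rw [hA] at up lo
  have b : (|A| + |g 0| * κ) * X + 2 / α * |f 0| ≤ (X + κ * X + 2 / α) * (|A| + |g 0| + |f 0|) := by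
    have h1 := abs_nonneg A
    have h2 := abs_nonneg (g 0)
    have h3 := abs_nonneg (f 0)
    have h4 : 0 < 2 / α := by positivity
    have h5 : 0 < κ * X := by positivity
    have : 0 ≤ |A| * (κ * X + 2 / α) + |g 0| * (X + 2 / α) + |f 0| * (X + κ * X) := by positivity
    linarith
  rw [abs_le]
  constructor <;> linarith
end

section
/- The boundary value problem T_ε u = 0 on [0,L], u(0) = A, R_ε u = 0 has at most one twice differentiable solution: if u₁ and u₂ are both twice differentiable with T_ε u₁ = T_ε u₂ = 0 on [0,L], u₁(0) = u₂(0) = A, and R_ε u₁ = R_ε u₂ = 0, then u₁ = u₂ on [0,L]. -/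
open Set Filter Topology

/-- One-sided comparison. -/
lemma aux_le (L ε α β γ : ℝ) (hL : 0 < L) (hε : 0 < ε)
    (hα : 0 < α) (hγ : 0 < γ)
    (hγε : γ ≤ α ^ 2 - 4 * ε * β)
    (a g f : ℝ → ℝ) (haα : ∀ x ∈ Icc 0 L, α ≤ a x)
    (hg : ContDiff ℝ 2 g) (hgβ : ∀ s : ℝ, -β ≤ deriv g s)
    (hf : ContDiff ℝ 1 f) (hf0 : ∀ s : ℝ, 0 ≤ deriv f s)
    (u₁ u₂ : ℝ → ℝ)
    (hu₁ : ∀ x ∈ Icc 0 L, DifferentiableAt ℝ u₁ x)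
    (hu₁' : ∀ x ∈ Icc 0 L, DifferentiableAt ℝ (deriv u₁) x)
    (hu₂ : ∀ x ∈ Icc 0 L, DifferentiableAt ℝ u₂ x)
    (hu₂' : ∀ x ∈ Icc 0 L, DifferentiableAt ℝ (deriv u₂) x)
    (heq₁ : ∀ x ∈ Icc 0 L,
      -ε * deriv (deriv u₁) x + a x * deriv u₁ x + g (u₁ x) = 0)
    (heq₂ : ∀ x ∈ Icc 0 L,
      -ε * deriv (deriv u₂) x + a x * deriv u₂ x + g (u₂ x) = 0)
    (hbc : u₁ 0 = u₂ 0)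
    (hR₁ : ε * deriv u₁ L + f (u₁ L) = 0)
    (hR₂ : ε * deriv u₂ L + f (u₂ L) = 0) :
    ∀ x ∈ Icc 0 L, u₁ x ≤ u₂ x := by
  have hfm : Monotone f := monotone_of_deriv_nonneg (hf.differentiable (by norm_num)) hf0
  have hgd : Differentiable ℝ g := hg.differentiable (by norm_num)
  have hgm : Monotone (fun s => g s + β * s) := by
    have hd : ∀ s, HasDerivAt (fun s => g s + β * s) (deriv g s + β * 1) s := fun s =>
      (hgd s).hasDerivAt.add ((hasDerivAt_id s).const_mul β)
    refine monotone_of_deriv_nonneg (fun s => (hd s).differentiableAt) (fun s => ?_)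
    rw [(hd s).deriv]
    linarith [hgβ s]
  obtain ⟨l, hl⟩ : ∃ l, l = α / (2 * ε) := ⟨_, rfl⟩
  have hl0 : 0 < l := by rw [hl]; positivity
  have hlα : 2 * ε * l = α := by rw [hl]; field_simp
  have hkey : 0 < -ε * l ^ 2 + α * l - β := by
    have h1 : 4 * ε * (-ε * l ^ 2 + α * l - β) = α ^ 2 - 4 * ε * β := by
      rw [← hlα]; ring
    have h2 : 0 < 4 * ε * (-ε * l ^ 2 + α * l - β) := by linarith
    exact pos_of_mul_pos_right h2 (by positivity)
  set v : ℝ → ℝ := fun x => Real.exp (-l * x) * (u₁ x - u₂ x) with hv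
  have hexp : ∀ x, HasDerivAt (fun x => Real.exp (-l * x)) (Real.exp (-l * x) * (-l * 1)) x :=
    fun x => ((hasDerivAt_id x).const_mul (-l)).exp
  have hvd : ∀ x ∈ Icc 0 L, HasDerivAt v
      (Real.exp (-l * x) * ((deriv u₁ x - deriv u₂ x) - l * (u₁ x - u₂ x))) x := by
    intro x hx
    refine ((hexp x).mul ((hu₁ x hx).hasDerivAt.sub (hu₂ x hx).hasDerivAt)).congr_deriv ?_
    simp only [Pi.sub_apply]
    ring
  have hvc : ContinuousOn v (Icc 0 L) := fun x hx =>
    (hvd x hx).continuousAt.continuousWithinAt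
  obtain ⟨x₀, hx₀, hmax⟩ := isCompact_Icc.exists_isMaxOn (nonempty_Icc.2 hL.le) hvc
  by_contra hcon
  push Not at hcon
  obtain ⟨y, hy, hlt⟩ := hcon
  have hvy : 0 < v y := mul_pos (Real.exp_pos _) (by linarith)
  have hv0 : 0 < v x₀ := lt_of_lt_of_le hvy (hmax hy)
  have hw : 0 < u₁ x₀ - u₂ x₀ := pos_of_mul_pos_right hv0 (Real.exp_pos _).le
  have hx0 : 0 < x₀ := by
    rcases hx₀.1.eq_or_lt with h | h
    · rw [← h, hbc] at hw; linarith
    · exact h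
  rcases hx₀.2.eq_or_lt with h | h
  · subst h
    have hd := hvd x₀ hx₀
    have hneg : Real.exp (-l * x₀) * ((deriv u₁ x₀ - deriv u₂ x₀) - l * (u₁ x₀ - u₂ x₀)) < 0 := by
      refine mul_neg_of_pos_of_neg (Real.exp_pos _) ?_
      have h1 := hfm (by linarith : u₂ x₀ ≤ u₁ x₀)
      have h2 : ε * (deriv u₁ x₀ - deriv u₂ x₀) ≤ 0 := by linarith
      have h3 : deriv u₁ x₀ - deriv u₂ x₀ ≤ 0 := nonpos_of_mul_nonpos_right h2 hε
      have := mul_pos hl0 hw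
      linarith
    have hs := (hasDerivAt_iff_tendsto_slope.1 hd).eventually (gt_mem_nhds hneg)
    have hs' : ∀ᶠ z in 𝓝[<] x₀, slope v x₀ z < 0 :=
      hs.filter_mono (nhdsWithin_mono _ (fun z hz => ne_of_lt hz))
    obtain ⟨z, hz1, hz2⟩ := (hs'.and (Ioo_mem_nhdsLT hx0)).exists
    have hz3 : v z ≤ v x₀ := hmax ⟨hz2.1.le, hz2.2.le⟩
    rw [slope_def_field] at hz1
    have : 0 ≤ (v z - v x₀) / (z - x₀) :=
      div_nonneg_of_nonpos (by linarith) (by linarith [hz2.2])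
    linarith
  · have hI : Icc 0 L ∈ 𝓝 x₀ := Icc_mem_nhds hx0 h
    have hlm : IsLocalMax v x₀ := hmax.isLocalMax hI
    have hd0 := hlm.deriv_eq_zero
    have hw1 : (deriv u₁ x₀ - deriv u₂ x₀) = l * (u₁ x₀ - u₂ x₀) := by
      rw [(hvd x₀ hx₀).deriv] at hd0
      have := (mul_eq_zero.1 hd0).resolve_left (Real.exp_pos _).ne'
      linarith
    have hde : deriv v =ᶠ[𝓝 x₀] fun x =>
        Real.exp (-l * x) * ((deriv u₁ x - deriv u₂ x) - l * (u₁ x - u₂ x)) := by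
      filter_upwards [hI] with x hx using (hvd x hx).deriv
    have hdd : HasDerivAt (deriv v) (Real.exp (-l * x₀) *
        ((deriv (deriv u₁) x₀ - deriv (deriv u₂) x₀) - l ^ 2 * (u₁ x₀ - u₂ x₀))) x₀ := by
      refine HasDerivAt.congr_of_eventuallyEq ?_ hde
      refine ((hexp x₀).mul (((hu₁' x₀ hx₀).hasDerivAt.sub (hu₂' x₀ hx₀).hasDerivAt).sub
        (((hu₁ x₀ hx₀).hasDerivAt.sub (hu₂ x₀ hx₀).hasDerivAt).const_mul l))).congr_deriv ?_
      simp only [Pi.sub_apply]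
      rw [hw1]
      ring
    have hpos : 0 < deriv (deriv v) x₀ := by
      rw [hdd.deriv]
      refine mul_pos (Real.exp_pos _) ?_
      have h1 := hgm (by linarith : u₂ x₀ ≤ u₁ x₀)
      simp only at h1
      have h2 : ε * (deriv (deriv u₁) x₀ - deriv (deriv u₂) x₀)
          = a x₀ * (l * (u₁ x₀ - u₂ x₀)) + (g (u₁ x₀) - g (u₂ x₀)) := by
        rw [← hw1]; linarith [heq₁ x₀ hx₀, heq₂ x₀ hx₀]
      have h3 : α * (l * (u₁ x₀ - u₂ x₀)) ≤ a x₀ * (l * (u₁ x₀ - u₂ x₀)) :=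
        mul_le_mul_of_nonneg_right (haα x₀ hx₀) (mul_pos hl0 hw).le
      have h4 := mul_pos hkey hw
      refine pos_of_mul_pos_right (a := ε) ?_ hε.le
      linarith
    have hmin := isLocalMin_of_deriv_deriv_pos hpos hd0 (hvd x₀ hx₀).continuousAt
    have hc : v =ᶠ[𝓝 x₀] fun _ => v x₀ := by
      filter_upwards [hlm, hmin] with z h1 h2 using le_antisymm h1 h2
    have := hc.deriv.deriv_eq
    simp at this
    linarith

/-- Uniqueness: the boundary value problem `T_ε u = 0` on `[0, L]`, `u 0 = A`,
`R_ε u = 0` has at most one twice differentiable solution. -/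
theorem statement6 (L ε α β γ A : ℝ) (hL : 0 < L) (hε : ε ∈ Ioc (0 : ℝ) 1)
    (hα : 0 < α) (hβ : 0 < β) (hγ : 0 < γ)
    (hγε : γ ≤ α ^ 2 - 4 * ε * β)
    (a g f : ℝ → ℝ)
    (ha : ContDiffOn ℝ 1 a (Icc 0 L)) (haα : ∀ x ∈ Icc 0 L, α ≤ a x)
    (hg : ContDiff ℝ 2 g) (hgβ : ∀ s : ℝ, -β ≤ deriv g s)
    (hf : ContDiff ℝ 1 f) (hf0 : ∀ s : ℝ, 0 ≤ deriv f s)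
    (u₁ u₂ : ℝ → ℝ)
    (hu₁ : ∀ x ∈ Icc 0 L, DifferentiableAt ℝ u₁ x)
    (hu₁' : ∀ x ∈ Icc 0 L, DifferentiableAt ℝ (deriv u₁) x)
    (hu₂ : ∀ x ∈ Icc 0 L, DifferentiableAt ℝ u₂ x)
    (hu₂' : ∀ x ∈ Icc 0 L, DifferentiableAt ℝ (deriv u₂) x)
    (heq₁ : ∀ x ∈ Icc 0 L,
      -ε * deriv (deriv u₁) x + a x * deriv u₁ x + g (u₁ x) = 0)
    (heq₂ : ∀ x ∈ Icc 0 L,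
      -ε * deriv (deriv u₂) x + a x * deriv u₂ x + g (u₂ x) = 0)
    (hbc₁ : u₁ 0 = A) (hbc₂ : u₂ 0 = A)
    (hR₁ : ε * deriv u₁ L + f (u₁ L) = 0)
    (hR₂ : ε * deriv u₂ L + f (u₂ L) = 0) :
    ∀ x ∈ Icc 0 L, u₁ x = u₂ x := by
  have hle := aux_le L ε α β γ hL hε.1 hα hγ hγε a g f haα hg hgβ hf hf0
  intro x hx
  exact le_antisymm
    (hle u₁ u₂ hu₁ hu₁' hu₂ hu₂' heq₁ heq₂ (hbc₁.trans hbc₂.symm) hR₁ hR₂ x hx)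
    (hle u₂ u₁ hu₂ hu₂' hu₁ hu₁' heq₂ heq₁ (hbc₂.trans hbc₁.symm) hR₂ hR₁ x hx)
end

section
/- Let u : [0,L] → ℝ be a twice differentiable solution of T_ε u = 0 on [0,L], u(0) = A, R_ε u = 0. Then there exists a constant C > 0 independent of ε such that |u'(x)| ≤ C [ 1 + (1/ε) e^{α(x−L)/ε} ] for all x ∈ [0,L]. -/
open Set

lemma aux_right {w : ℝ → ℝ} {c x y : ℝ} (hxy : x < y) (hw : HasDerivAt w c x) (hc : 0 < c) :
    ∃ z ∈ Ioo x y, ∀ t ∈ Ioo x z, w x < w t := by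
  have h1 := (hasDerivWithinAt_iff_tendsto_slope' (by simp)).1 (hw.hasDerivWithinAt (s := Ioi x))
  have h2 := h1.eventually (lt_mem_nhds hc)
  have h3 := h2.and (Ioo_mem_nhdsGT hxy)
  obtain ⟨z, hz, hz2⟩ := (mem_nhdsGT_iff_exists_Ioo_subset).1 h3
  have hz' : x < z := hz
  refine ⟨min z ((x + y) / 2), ⟨lt_min hz' (by linarith), (min_le_right _ _).trans_lt (by linarith)⟩, ?_⟩
  intro t ht
  have h4 := (hz2 ⟨ht.1, ht.2.trans_le (min_le_left _ _)⟩).1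
  rw [slope_def_field, div_pos_iff_of_pos_right (by linarith [ht.1])] at h4
  linarith

lemma aux_max_right {w : ℝ → ℝ} {c x y : ℝ} (hxy : x < y) (hw : HasDerivAt w c x)
    (hm : ∀ t ∈ Ioo x y, w t ≤ w x) : c ≤ 0 := by
  by_contra! hc
  obtain ⟨z, hz, h⟩ := aux_right hxy hw hc
  have hz1 := hz.1
  have hz2 := hz.2
  have := h ((x + z) / 2) ⟨by linarith, by linarith⟩
  have := hm ((x + z) / 2) ⟨by linarith, by linarith⟩
  linarith

lemma aux_max_left {w : ℝ → ℝ} {c x y : ℝ} (hxy : y < x) (hw : HasDerivAt w c x)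
    (hm : ∀ t ∈ Ioo y x, w t ≤ w x) : 0 ≤ c := by
  have h : HasDerivAt (fun t => w (-t)) (-c) (-x) := by
    have h0 : HasDerivAt w c (- -x) := by simpa using hw
    have h1 := h0.comp (-x) (hasDerivAt_neg (-x))
    rw [mul_neg_one] at h1
    exact h1
  have := aux_max_right (y := -y) (by linarith) h (by
    intro t ht
    simpa using hm (-t) ⟨by linarith [ht.2], by linarith [ht.1]⟩)
  linarith

lemma aux_second_s7 {w w1 : ℝ → ℝ} {c x y : ℝ} (hxy : x < y)
    (hw : ∀ t ∈ Ico x y, HasDerivAt w (w1 t) t) (hw1 : HasDerivAt w1 c x) (h0 : w1 x = 0)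
    (hm : ∀ t ∈ Ioo x y, w t ≤ w x) : c ≤ 0 := by
  by_contra! hc
  obtain ⟨z, hz, h⟩ := aux_right hxy hw1 hc
  obtain ⟨s, hs, hs2⟩ := exists_hasDerivAt_eq_slope w w1 hz.1
    (fun t ht => (hw t ⟨ht.1, ht.2.trans_lt hz.2⟩).continuousAt.continuousWithinAt)
    (fun t ht => hw t ⟨ht.1.le, ht.2.trans hz.2⟩)
  have h1 := h s hs
  rw [h0, hs2, div_pos_iff_of_pos_right (by linarith [hz.1])] at h1
  linarith [hm z hz]

/-- One-sided derivative bound. -/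
lemma deriv_upper {L α ε G F : ℝ} (hL : 0 < L) (hα : 0 < α) (hε : 0 < ε)
    (hG : 0 ≤ G) (hF : 0 ≤ F) {a r p q : ℝ → ℝ} (haα : ∀ x ∈ Icc 0 L, α ≤ a x)
    (hp : ∀ x ∈ Icc 0 L, HasDerivAt p (q x) x)
    (he : ∀ x ∈ Icc 0 L, -ε * q x + a x * p x + r x = 0)
    (hr : ∀ x ∈ Icc 0 L, -G ≤ r x) (hpL : p L ≤ F / ε) :
    ∀ x ∈ Icc 0 L, p x ≤ G / α + F / ε * Real.exp (α * (x - L) / ε) := by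
  set b : ℝ → ℝ := fun x => G / α + F / ε * Real.exp (α * (x - L) / ε) with hb
  have hbd : ∀ x, HasDerivAt b (F / ε * (Real.exp (α * (x - L) / ε) * (α / ε))) x := by
    intro x
    have h1 : HasDerivAt (fun x : ℝ => α * (x - L) / ε) (α / ε) x := by
      simpa using ((((hasDerivAt_id x).sub_const L).const_mul α).div_const ε)
    exact (h1.exp.const_mul (F / ε)).const_add (G / α)
  have hd : ∀ x ∈ Icc 0 L, HasDerivAt (fun x => p x - b x)
      (q x - F / ε * (Real.exp (α * (x - L) / ε) * (α / ε))) x :=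
    fun x hx => (hp x hx).sub (hbd x)
  obtain ⟨x0, hx0, hmax⟩ := isCompact_Icc.exists_isMaxOn (nonempty_Icc.2 hL.le)
    (fun x hx => (hd x hx).continuousAt.continuousWithinAt)
  intro x hx
  have hmx : p x - b x ≤ p x0 - b x0 := hmax hx
  change p x ≤ b x
  by_contra! hlt
  have hpos : 0 < p x0 - b x0 := by linarith
  have hb0 : 0 ≤ b x0 := by simp only [hb]; positivity
  have hne : x0 ≠ L := by
    rintro rfl
    have : 0 ≤ G / α := by positivity
    simp only [hb, sub_self, mul_zero, zero_div, Real.exp_zero, mul_one] at hpos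
    linarith
  have hlt' : x0 < L := lt_of_le_of_ne hx0.2 hne
  have h1 := aux_max_right hlt' (hd x0 hx0) (fun t ht => hmax ⟨hx0.1.trans ht.1.le, ht.2.le⟩)
  have h2 := he x0 hx0
  have h3 := hr x0 hx0
  have h4 := haα x0 hx0
  have h5 : ε * (F / ε * (Real.exp (α * (x0 - L) / ε) * (α / ε))) = α * b x0 - G := by
    simp only [hb]; field_simp; ring
  have h6 : ε * (q x0 - F / ε * (Real.exp (α * (x0 - L) / ε) * (α / ε))) ≤ 0 :=
    mul_nonpos_of_nonneg_of_nonpos hε.le h1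
  rw [mul_sub, h5] at h6
  have h7 : α * p x0 ≤ a x0 * p x0 := mul_le_mul_of_nonneg_right h4 (by linarith)
  have h8 : 0 < α * (p x0 - b x0) := mul_pos hα hpos
  nlinarith

set_option maxHeartbeats 2000000 in
/-- One-sided bound for the solution. -/
lemma sol_upper {L α β γ ε K : ℝ} (hL : 0 < L) (hα : 0 < α) (hβ : 0 < β) (hγ : 0 < γ)
    (hε : 0 < ε) (hεγ : γ ≤ α ^ 2 - 4 * ε * β) (hK : 0 < K)
    {a r p q u : ℝ → ℝ} {g0 f0 : ℝ} (haα : ∀ x ∈ Icc 0 L, α ≤ a x)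
    (hu : ∀ x ∈ Icc 0 L, HasDerivAt u (p x) x)
    (hp : ∀ x ∈ Icc 0 L, HasDerivAt p (q x) x)
    (he : ∀ x ∈ Icc 0 L, -ε * q x + a x * p x + r x = 0)
    (hr : ∀ x ∈ Icc 0 L, 0 ≤ u x → g0 - β * u x ≤ r x)
    (hbc : 0 ≤ u L → ε * p L ≤ -f0)
    (hK0 : u 0 ≤ K) (hKg : -g0 < K * (β * γ / α ^ 2)) (hKf : -f0 < K * (α / 2)) :
    ∀ x ∈ Icc 0 L, u x ≤ K * (Real.exp (2 * β / α * L) + 1) := by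
  set l : ℝ := 2 * β / α with hl
  set m : ℝ := α / (2 * ε) with hm
  have hl0 : 0 < l := by positivity
  have hm0 : 0 < m := by positivity
  set E1 : ℝ → ℝ := fun x => Real.exp (l * x) with hE1
  set E2 : ℝ → ℝ := fun x => Real.exp (m * (x - L)) with hE2
  have hE1d : ∀ x, HasDerivAt E1 (l * E1 x) x := by
    intro x
    have h1 : HasDerivAt (fun x : ℝ => l * x) l x := by
      simpa using ((hasDerivAt_id x).const_mul l)
    simpa [hE1, mul_comm] using h1.exp
  have hE2d : ∀ x, HasDerivAt E2 (m * E2 x) x := by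
    intro x
    have h1 : HasDerivAt (fun x : ℝ => m * (x - L)) m x := by
      simpa using (((hasDerivAt_id x).sub_const L).const_mul m)
    simpa [hE2, mul_comm] using h1.exp
  have hE1p : ∀ x, 0 < E1 x := fun x => Real.exp_pos _
  have hE2p : ∀ x, 0 < E2 x := fun x => Real.exp_pos _
  set B : ℝ → ℝ := fun x => K * (E1 x + E2 x) with hB
  set B1 : ℝ → ℝ := fun x => K * (l * E1 x + m * E2 x) with hB1
  set B2 : ℝ → ℝ := fun x => K * (l * (l * E1 x) + m * (m * E2 x)) with hB2
  have hBd : ∀ x, HasDerivAt B (B1 x) x := fun x => ((hE1d x).add (hE2d x)).const_mul K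
  have hB1d : ∀ x, HasDerivAt B1 (B2 x) x := fun x =>
    (((hE1d x).const_mul l).add ((hE2d x).const_mul m)).const_mul K
  have hBp : ∀ x, 0 < B x := fun x => mul_pos hK (add_pos (hE1p x) (hE2p x))
  obtain ⟨x0, hx0, hmax⟩ := isCompact_Icc.exists_isMaxOn (nonempty_Icc.2 hL.le)
    (f := fun x => u x / B x)
    (fun x hx => ((hu x hx).continuousAt.div (hBd x).continuousAt (hBp x).ne').continuousWithinAt)
  have key : u x0 / B x0 ≤ 1 := by
    by_contra! ht
    set t := u x0 / B x0 with htd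
    have ht0 : 0 < t := by linarith
    have hut : u x0 = t * B x0 := by rw [htd]; field_simp [(hBp x0).ne']
    have hle : ∀ x ∈ Icc 0 L, u x - t * B x ≤ u x0 - t * B x0 := by
      intro x hx
      have h1 : u x / B x ≤ t := hmax hx
      rw [div_le_iff₀ (hBp x)] at h1
      linarith
    have hwd : ∀ x ∈ Icc 0 L, HasDerivAt (fun x => u x - t * B x) (p x - t * B1 x) x :=
      fun x hx => (hu x hx).sub ((hBd x).const_mul t)
    have hw1d : HasDerivAt (fun x => p x - t * B1 x) (q x0 - t * B2 x0) x0 :=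
      (hp x0 hx0).sub ((hB1d x0).const_mul t)
    have hu0 : 0 < u x0 := by rw [hut]; exact mul_pos ht0 (hBp x0)
    have hx0pos : 0 < x0 := by
      refine lt_of_le_of_ne hx0.1 ?_
      rintro rfl
      have h1 : K < B 0 := by
        have : E1 0 = 1 := by simp [hE1]
        have h2 := mul_pos hK (hE2p 0)
        simp only [hB, this]; linarith
      nlinarith
    have hleft := aux_max_left hx0pos (hwd x0 hx0)
      (fun s hs => hle s ⟨hs.1.le, hs.2.le.trans hx0.2⟩)
    rcases hx0.2.eq_or_lt with hxL | hxL
    · subst hxL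
      have h1 := hbc hu0.le
      have h2 : E2 x0 = 1 := by simp [hE2]
      have h3 : ε * B1 x0 = K * (ε * l * E1 x0) + K * (α / 2) := by
        simp only [hB1, h2, hm]; field_simp
      have h4 : 0 < K * (ε * l * E1 x0) := by have := hE1p x0; positivity
      have h5 : 0 ≤ ε * (p x0 - t * B1 x0) := mul_nonneg hε.le hleft
      have h6 : 0 < K * (α / 2) := by positivity
      have h7 : ε * B1 x0 < t * (ε * B1 x0) := by nlinarith
      nlinarith
    · have hright := aux_max_right hxL (hwd x0 hx0)
        (fun s hs => hle s ⟨hx0.1.trans hs.1.le, hs.2.le⟩)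
      have h0 : p x0 - t * B1 x0 = 0 := le_antisymm hright hleft
      have hsec := aux_second_s7 hxL (fun s hs => hwd s ⟨hx0.1.trans hs.1, hs.2.le⟩) hw1d h0
        (fun s hs => hle s ⟨hx0.1.trans hs.1.le, hs.2.le⟩)
      have h1 := he x0 hx0
      have h2 := hr x0 hx0 hu0.le
      have h3 := haα x0 hx0
      have hB1p : 0 < B1 x0 := by
        have := hE1p x0
        have := hE2p x0
        simp only [hB1]; positivity
      have hk : 0 < β * γ / α ^ 2 := by positivity
      have c1 : β * γ / α ^ 2 ≤ -ε * l ^ 2 + α * l - β := by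
        have : -ε * l ^ 2 + α * l - β = β * (α ^ 2 - 4 * ε * β) / α ^ 2 := by
          simp only [hl]; field_simp; ring
        rw [this]; gcongr
      have c2 : 0 < -ε * m ^ 2 + α * m - β := by
        have : -ε * m ^ 2 + α * m - β = (α ^ 2 - 4 * ε * β) / (4 * ε) := by
          simp only [hm]; field_simp; ring
        rw [this]; apply div_pos <;> linarith
      have c3 : 1 ≤ E1 x0 := Real.one_le_exp (by positivity)
      have c4 : K * (β * γ / α ^ 2) ≤ -ε * B2 x0 + α * B1 x0 - β * B x0 := by
        have e : -ε * B2 x0 + α * B1 x0 - β * B x0 =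
          K * ((-ε * l ^ 2 + α * l - β) * E1 x0 + (-ε * m ^ 2 + α * m - β) * E2 x0) := by
          simp only [hB2, hB1, hB]; ring
        rw [e]
        apply mul_le_mul_of_nonneg_left _ hK.le
        have := mul_pos c2 (hE2p x0)
        nlinarith
      have c5 : 0 < K * (β * γ / α ^ 2) := by positivity
      have c6 : K * (β * γ / α ^ 2) ≤ t * (-ε * B2 x0 + α * B1 x0 - β * B x0) :=
        c4.trans (le_mul_of_one_le_left (c5.le.trans c4) ht.le)
      have c7 : t * (α * B1 x0) ≤ a x0 * p x0 := by
        have : p x0 = t * B1 x0 := by linarith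
        rw [this]
        have := mul_le_mul_of_nonneg_right h3 (mul_pos ht0 hB1p).le
        linarith
      have c8 : ε * (q x0 - t * B2 x0) ≤ 0 := mul_nonpos_of_nonneg_of_nonpos hε.le hsec
      rw [hut] at h2
      nlinarith
  intro x hx
  have h1 : u x / B x ≤ 1 := le_trans (hmax hx) key
  rw [div_le_one (hBp x)] at h1
  refine h1.trans ?_
  apply mul_le_mul_of_nonneg_left _ hK.le
  have h2 : E1 x ≤ Real.exp (l * L) := Real.exp_le_exp.2 (mul_le_mul_of_nonneg_left hx.2 hl0.le)
  have h3 : E2 x ≤ 1 := Real.exp_le_one_iff.2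
    (mul_nonpos_of_nonneg_of_nonpos hm0.le (by linarith [hx.2]))
  linarith

/-- Derivative estimate exhibiting the exponential boundary layer: there is a
constant `C > 0` independent of `ε` such that any twice differentiable solution
`u` of `T_ε u = 0`, `u 0 = A`, `R_ε u = 0` satisfies
`|u' x| ≤ C (1 + (1/ε) exp (α (x - L) / ε))` on `[0, L]`. -/
theorem statement7 (L α β γ A : ℝ) (hL : 0 < L)
    (hα : 0 < α) (hβ : 0 < β) (hγ : 0 < γ)
    (a g f : ℝ → ℝ)
    (ha : ContDiffOn ℝ 1 a (Icc 0 L)) (haα : ∀ x ∈ Icc 0 L, α ≤ a x)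
    (hg : ContDiff ℝ 2 g) (hgβ : ∀ s : ℝ, -β ≤ deriv g s)
    (hf : ContDiff ℝ 1 f) (hf0 : ∀ s : ℝ, 0 ≤ deriv f s) :
    ∃ C > (0 : ℝ), ∀ ε ∈ Ioc (0 : ℝ) 1,
      γ ≤ α ^ 2 - 4 * ε * β →
      ∀ u : ℝ → ℝ,
        (∀ x ∈ Icc 0 L, DifferentiableAt ℝ u x) →
        (∀ x ∈ Icc 0 L, DifferentiableAt ℝ (deriv u) x) →
        (∀ x ∈ Icc 0 L,
          -ε * deriv (deriv u) x + a x * deriv u x + g (u x) = 0) →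
        u 0 = A →
        ε * deriv u L + f (u L) = 0 →
        ∀ x ∈ Icc 0 L,
          |deriv u x| ≤ C * (1 + (1 / ε) * Real.exp (α * (x - L) / ε)) := by
  have hgd : Differentiable ℝ g := hg.differentiable (by norm_num)
  have hfd : Differentiable ℝ f := hf.differentiable (by norm_num)
  have hfm : Monotone f := monotone_of_deriv_nonneg hfd hf0
  have hgm : Monotone (fun s => g s + β * s) := by
    have hd : ∀ s, HasDerivAt (fun s => g s + β * s) (deriv g s + β) s := by
      intro s
      have h1 := (hgd s).hasDerivAt.add ((hasDerivAt_id s).const_mul β)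
      rw [mul_one] at h1
      exact h1
    apply monotone_of_deriv_nonneg (fun s => (hd s).differentiableAt)
    intro s
    rw [(hd s).deriv]; linarith [hgβ s]
  set k : ℝ := β * γ / α ^ 2 with hk
  have hk0 : 0 < k := by positivity
  obtain ⟨K, hK, hKA, hKg, hKf⟩ : ∃ K : ℝ, 0 < K ∧ |A| ≤ K ∧ |g 0| < K * k ∧
      |f 0| < K * (α / 2) := by
    refine ⟨|A| + |g 0| / k + |f 0| / (α / 2) + 1, by positivity, ?_, ?_, ?_⟩
    · have : 0 ≤ |g 0| / k := by positivity
      have : 0 ≤ |f 0| / (α / 2) := by positivity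
      linarith
    · rw [← div_lt_iff₀ hk0]
      have : 0 ≤ |f 0| / (α / 2) := by positivity
      linarith [abs_nonneg A]
    · rw [← div_lt_iff₀ (by positivity)]
      have : 0 ≤ |g 0| / k := by positivity
      linarith [abs_nonneg A]
  set M : ℝ := K * (Real.exp (2 * β / α * L) + 1) with hM
  obtain ⟨G, hG⟩ := (isCompact_Icc (a := -M) (b := M)).exists_bound_of_continuousOn
    hgd.continuous.continuousOn
  obtain ⟨F, hF⟩ := (isCompact_Icc (a := -M) (b := M)).exists_bound_of_continuousOn
    hfd.continuous.continuousOn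
  have hM0 : 0 ≤ M := by positivity
  have hG0 : 0 ≤ G := (norm_nonneg _).trans (hG 0 ⟨by linarith, hM0⟩)
  have hF0 : 0 ≤ F := (norm_nonneg _).trans (hF 0 ⟨by linarith, hM0⟩)
  refine ⟨G / α + F + 1, by positivity, ?_⟩
  intro ε hε hεγ u hu hp he hA hbc
  have hε0 : 0 < ε := hε.1
  have hu' : ∀ x ∈ Icc 0 L, HasDerivAt u (deriv u x) x := fun x hx => (hu x hx).hasDerivAt
  have hp' : ∀ x ∈ Icc 0 L, HasDerivAt (deriv u) (deriv (deriv u) x) x :=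
    fun x hx => (hp x hx).hasDerivAt
  have hg0 := abs_lt.1 hKg
  have hf0' := abs_lt.1 hKf
  have hA' := abs_le.1 hKA
  have hup : ∀ x ∈ Icc 0 L, u x ≤ M := by
    refine sol_upper hL hα hβ hγ hε0 hεγ hK haα hu' hp' (r := fun x => g (u x)) (g0 := g 0)
      (f0 := f 0) he ?_ ?_ (by linarith) (by linarith) (by linarith)
    · intro x hx h
      have := hgm h
      simp only at this
      linarith
    · intro h
      linarith [hfm h]
  have hlo : ∀ x ∈ Icc 0 L, -u x ≤ M := by
    refine sol_upper (u := fun x => -u x) (p := fun x => -deriv u x)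
      (q := fun x => -deriv (deriv u) x) hL hα hβ hγ hε0 hεγ hK haα
      (fun x hx => (hu' x hx).neg) (fun x hx => (hp' x hx).neg)
      (r := fun x => -g (u x)) (g0 := -g 0)
      (f0 := -f 0) ?_ ?_ ?_ (by linarith) (by linarith) (by linarith)
    · intro x hx
      linarith [he x hx]
    · intro x hx h
      have := hgm (show u x ≤ 0 by linarith)
      simp only at this
      linarith
    · intro h
      linarith [hfm (show u L ≤ 0 by linarith)]
  have hmem : ∀ x ∈ Icc 0 L, u x ∈ Icc (-M) M :=
    fun x hx => ⟨by linarith [hlo x hx], hup x hx⟩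
  have hGu : ∀ x ∈ Icc 0 L, -G ≤ g (u x) ∧ g (u x) ≤ G :=
    fun x hx => abs_le.1 (hG _ (hmem x hx))
  have hFu := abs_le.1 (hF _ (hmem L ⟨hL.le, le_rfl⟩))
  have d1 := deriv_upper (r := fun x => g (u x)) hL hα hε0 hG0 hF0 haα hp' he
    (fun x hx => (hGu x hx).1) (by rw [le_div_iff₀ hε0]; linarith)
  have d2 := deriv_upper (p := fun x => -deriv u x) (q := fun x => -deriv (deriv u) x)
    (r := fun x => -g (u x)) hL hα hε0 hG0 hF0 haα (fun x hx => (hp' x hx).neg)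
    (fun x hx => by linarith [he x hx])
    (fun x hx => by linarith [(hGu x hx).2]) (by rw [le_div_iff₀ hε0]; linarith)
  intro x hx
  have h1 := d1 x hx
  have h2 := d2 x hx
  have h3 : |deriv u x| ≤ G / α + F / ε * Real.exp (α * (x - L) / ε) :=
    abs_le.2 ⟨by linarith, h1⟩
  refine h3.trans ?_
  have h4 : 0 ≤ 1 / ε * Real.exp (α * (x - L) / ε) := by positivity
  have h5 : F / ε * Real.exp (α * (x - L) / ε) = F * (1 / ε * Real.exp (α * (x - L) / ε)) := by
    ring
  rw [h5]
  have h6 : 0 ≤ G / α := by positivity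
  nlinarith [mul_nonneg h6 h4]
end

section
/- Let c : [0,1] → ℝ be continuous with c(x) ≥ α > 0, let r : [0,1] → ℝ be continuous, and let ε > 0. If z : [0,1] → ℝ is twice differentiable with (ε + x)² z''(x) − c(x) z(x) = r(x) on [0,1] and z(0) = z(1) = 0, then sup_{x∈[0,1]} |z(x)| ≤ (1/α) sup_{x∈[0,1]} |r(x)|. -/
open Set

open Filter Topology in
theorem second_deriv_nonpos_of_max (z : ℝ → ℝ) (p : ℝ) (hd : DifferentiableAt ℝ z p)
    (hm : IsLocalMax z p) : deriv (deriv z) p ≤ 0 := by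
  by_contra! h
  have hmin : IsLocalMin z p := isLocalMin_of_deriv_deriv_pos h hm.deriv_eq_zero hd.continuousAt
  have he : z =ᶠ[𝓝 p] fun _ => z p := by
    filter_upwards [hm, hmin] with x h1 h2
    exact le_antisymm h1 h2
  have h2 := he.deriv.deriv_eq
  simp at h2
  linarith

theorem max_bound (ε α M : ℝ) (hα : 0 < α) (hM : 0 ≤ M)
    (c r : ℝ → ℝ)
    (hcα : ∀ x ∈ Icc (0 : ℝ) 1, α ≤ c x)
    (hr : ∀ x ∈ Icc (0 : ℝ) 1, |r x| ≤ M)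
    (z : ℝ → ℝ)
    (hz : ∀ x ∈ Icc (0 : ℝ) 1, DifferentiableAt ℝ z x)
    (heq : ∀ x ∈ Icc (0 : ℝ) 1,
      (ε + x) ^ 2 * deriv (deriv z) x - c x * z x = r x)
    (hz0 : z 0 = 0) (hz1 : z 1 = 0) :
    ∀ x ∈ Icc (0 : ℝ) 1, α * z x ≤ M := by
  intro x hx
  obtain ⟨p, hp, hmax⟩ := isCompact_Icc.exists_isMaxOn ⟨x, hx⟩
    (fun y hy => (hz y hy).continuousAt.continuousWithinAt : ContinuousOn z (Icc 0 1))
  have hxp : z x ≤ z p := hmax hx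
  have h1 : α * z x ≤ α * z p := mul_le_mul_of_nonneg_left hxp hα.le
  refine h1.trans ?_
  by_cases hzp : z p ≤ 0
  · nlinarith
  push Not at hzp
  have hp0 : 0 < p := lt_of_le_of_ne hp.1 (by rintro rfl; linarith)
  have hp1 : p < 1 := lt_of_le_of_ne hp.2 (by rintro rfl; linarith)
  have h2 := second_deriv_nonpos_of_max z p (hz p hp) (hmax.isLocalMax (Icc_mem_nhds hp0 hp1))
  have h3 := heq p hp
  have h4 := (abs_le.1 (hr p hp)).1
  have h5 := mul_le_mul_of_nonneg_right (hcα p hp) hzp.le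
  have h6 := mul_nonpos_of_nonneg_of_nonpos (sq_nonneg (ε + p)) h2
  linarith

/-- Maximum-principle stability bound for `L z x = (ε + x)² z'' x - c x * z x`:
if `c ≥ α > 0`, `L z = r` on `[0,1]` and `z 0 = z 1 = 0`, then
`sup |z| ≤ (1/α) sup |r|`. -/
theorem statement10 (ε α : ℝ) (hε : 0 < ε) (hα : 0 < α)
    (c r : ℝ → ℝ)
    (hc : ContinuousOn c (Icc 0 1)) (hcα : ∀ x ∈ Icc (0 : ℝ) 1, α ≤ c x)
    (hr : ContinuousOn r (Icc 0 1))
    (z : ℝ → ℝ)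
    (hz : ∀ x ∈ Icc (0 : ℝ) 1, DifferentiableAt ℝ z x)
    (hz' : ∀ x ∈ Icc (0 : ℝ) 1, DifferentiableAt ℝ (deriv z) x)
    (heq : ∀ x ∈ Icc (0 : ℝ) 1,
      (ε + x) ^ 2 * deriv (deriv z) x - c x * z x = r x)
    (hz0 : z 0 = 0) (hz1 : z 1 = 0) :
    ∀ x ∈ Icc (0 : ℝ) 1,
      |z x| ≤ (1 / α) * sSup ((fun y => |r y|) '' Icc 0 1) := by
  intro x hx
  set M := sSup ((fun y => |r y|) '' Icc 0 1) with hMdef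
  have hb : BddAbove ((fun y => |r y|) '' Icc (0 : ℝ) 1) := (isCompact_Icc.image_of_continuousOn hr.abs).bddAbove
  have hrM : ∀ y ∈ Icc (0 : ℝ) 1, |r y| ≤ M := fun y hy => le_csSup hb ⟨y, hy, rfl⟩
  have hM : 0 ≤ M := (abs_nonneg _).trans (hrM x hx)
  have h1 := max_bound ε α M hα hM c r hcα hrM z hz heq hz0 hz1 x hx
  have h2 := max_bound ε α M hα hM c (fun y => -r y) hcα (by simpa using hrM) (fun y => -z y)
    (fun y hy => (hz y hy).neg)
    (by
      intro y hy
      have e : deriv (fun y => -z y) = fun y => -deriv z y := by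
        funext t; exact deriv.fun_neg
      rw [e, deriv.fun_neg, ← heq y hy]; ring) (by simpa using hz0) (by simpa using hz1) x hx
  rw [one_div, ← div_eq_inv_mul, le_div_iff₀ hα]
  rcases abs_cases (z x) with ⟨h, _⟩ | ⟨h, _⟩ <;> rw [h] <;> linarith
end

section
/- Let u : [0,1] → ℝ be a twice differentiable solution of (ε + x)² u''(x) − f(x, u(x)) = 0 on [0,1] with u(0) = A and u(1) = B. Then sup_{x∈[0,1]} |u(x)| ≤ max(|A|, |B|, (1/α) sup_{x∈[0,1]} |f(x, 0)|). -/
open Set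

/-- A maximum principle on `[0,1]`. -/
lemma max_principle_aux (v : ℝ → ℝ) (M : ℝ)
    (hv : ∀ x ∈ Icc (0 : ℝ) 1, DifferentiableAt ℝ v x)
    (h0 : v 0 ≤ M) (h1 : v 1 ≤ M)
    (hpos : ∀ x ∈ Icc (0 : ℝ) 1, M < v x → 0 < deriv (deriv v) x) :
    ∀ x ∈ Icc (0 : ℝ) 1, v x ≤ M := by
  intro x hx
  by_contra hlt
  have hlt := not_le.mp hlt
  have hc : ContinuousOn v (Icc 0 1) := fun y hy => (hv y hy).continuousAt.continuousWithinAt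
  obtain ⟨p, hp, hmax⟩ := isCompact_Icc.exists_isMaxOn (nonempty_Icc.mpr zero_le_one) hc
  have hMp : M < v p := lt_of_lt_of_le hlt (hmax hx)
  have hp0 : 0 < p := by
    rcases hp.1.eq_or_lt with h | h
    · rw [← h] at hMp; linarith
    · exact h
  have hp1 : p < 1 := by
    rcases hp.2.eq_or_lt with h | h
    · rw [h] at hMp; linarith
    · exact h
  have hloc : IsLocalMax v p := hmax.isLocalMax (Icc_mem_nhds hp0 hp1)
  have hdd := hpos p hp hMp
  have hmin : IsLocalMin v p :=
    isLocalMin_of_deriv_deriv_pos hdd hloc.deriv_eq_zero (hv p hp).continuousAt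
  have hev : v =ᶠ[nhds p] fun _ => v p := by
    filter_upwards [hloc, hmin] with y h1 h2
    exact le_antisymm h1 h2
  have h2 : deriv (deriv v) p = 0 := by
    rw [hev.deriv.deriv_eq]; simp
  linarith

/-- Boundedness of solutions of `(ε + x)² u'' = f (x, u)` on `[0,1]` with
`u 0 = A`, `u 1 = B` and `∂f/∂u ≥ α > 0`:
`sup |u| ≤ max (|A|, |B|, (1/α) sup |f(x, 0)|)`. -/
theorem statement11 (ε α A B : ℝ) (hε : ε ∈ Ioc (0 : ℝ) 1) (hα : 0 < α)
    (f : ℝ → ℝ → ℝ)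
    (hf : ContDiff ℝ 1 (Function.uncurry f))
    (hfu : ∀ x ∈ Icc (0 : ℝ) 1, ∀ s : ℝ, α ≤ deriv (fun t => f x t) s)
    (u : ℝ → ℝ)
    (hu : ∀ x ∈ Icc (0 : ℝ) 1, DifferentiableAt ℝ u x)
    (hu' : ∀ x ∈ Icc (0 : ℝ) 1, DifferentiableAt ℝ (deriv u) x)
    (heq : ∀ x ∈ Icc (0 : ℝ) 1,
      (ε + x) ^ 2 * deriv (deriv u) x - f x (u x) = 0)
    (hu0 : u 0 = A) (hu1 : u 1 = B) :
    ∀ x ∈ Icc (0 : ℝ) 1,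
      |u x| ≤ max |A| (max |B|
        ((1 / α) * sSup ((fun y => |f y 0|) '' Icc 0 1))) := by
  obtain ⟨hε0, -⟩ := hε
  set S := sSup ((fun y => |f y 0|) '' Icc (0 : ℝ) 1) with hS
  set M := max |A| (max |B| ((1 / α) * S)) with hM
  have hfc : Continuous (fun y => |f y 0|) := by
    have h := hf.continuous.comp (continuous_id.prodMk (continuous_const (y := (0 : ℝ))))
    exact h.abs
  have hbdd : BddAbove ((fun y => |f y 0|) '' Icc (0 : ℝ) 1) :=
    (isCompact_Icc.image hfc).bddAbove
  have hle : ∀ y ∈ Icc (0 : ℝ) 1, |f y 0| ≤ S := fun y hy =>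
    le_csSup hbdd (mem_image_of_mem _ hy)
  have hMA : |A| ≤ M := le_max_left _ _
  have hMB : |B| ≤ M := (le_max_left _ _).trans (le_max_right _ _)
  have hMS : S ≤ α * M := by
    have h : (1 / α) * S ≤ M := (le_max_right _ _).trans (le_max_right _ _)
    have h' := mul_le_mul_of_nonneg_left h hα.le
    rwa [← mul_assoc, mul_one_div_cancel hα.ne', one_mul] at h'
  have hM0 : 0 ≤ M := (abs_nonneg _).trans hMA
  have hmono : ∀ y ∈ Icc (0 : ℝ) 1, ∀ a b : ℝ, a ≤ b → α * (b - a) ≤ f y b - f y a := by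
    intro y hy a b hab
    have hd : Differentiable ℝ (fun t => f y t) := by
      have h : Differentiable ℝ (fun t : ℝ => (y, t)) := by fun_prop
      exact (hf.differentiable one_ne_zero).comp h
    exact mul_sub_le_image_sub_of_le_deriv hd (hfu y hy) hab
  have hup : ∀ x ∈ Icc (0 : ℝ) 1, u x ≤ M := by
    refine max_principle_aux u M hu (by rw [hu0]; exact (le_abs_self _).trans hMA)
      (by rw [hu1]; exact (le_abs_self _).trans hMB) ?_
    intro y hy hlt
    have h1 := hmono y hy 0 (u y) (by linarith)
    have h2 := neg_le_of_abs_le (hle y hy)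
    have h3 := mul_lt_mul_of_pos_left hlt hα
    have h4 := heq y hy
    have h5 : 0 < (ε + y) ^ 2 * deriv (deriv u) y := by linarith
    exact pos_of_mul_pos_right h5 (sq_nonneg _)
  have hlo : ∀ x ∈ Icc (0 : ℝ) 1, (fun t => -u t) x ≤ M := by
    refine max_principle_aux (fun t => -u t) M (fun y hy => (hu y hy).neg)
      (by simp only [hu0]; exact (neg_le_abs _).trans hMA)
      (by simp only [hu1]; exact (neg_le_abs _).trans hMB) ?_
    intro y hy hlt
    have hdd : deriv (deriv fun t => -u t) y = - deriv (deriv u) y := by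
      have : deriv (fun t => -u t) = fun t => - deriv u t := by
        funext t; exact deriv.fun_neg
      rw [this]; exact deriv.fun_neg
    rw [hdd]
    have h1 := hmono y hy (u y) 0 (by linarith)
    have h2 := le_of_abs_le (hle y hy)
    have h3 := mul_lt_mul_of_pos_left hlt hα
    have h4 := heq y hy
    have h5 : 0 < (ε + y) ^ 2 * (- deriv (deriv u) y) := by linarith
    exact pos_of_mul_pos_right h5 (sq_nonneg _)
  intro x hx
  exact abs_le.mpr ⟨by have := hlo x hx; simp only at this; linarith, hup x hx⟩
end

section
/- Let u : [0,1] → ℝ be a twice differentiable solution of (ε + x)² u''(x) − f(x, u(x)) = 0 on [0,1] with u(0) = A and u(1) = B. Then there exists a constant C > 0 independent of ε such that |u'(x)| ≤ C/(ε + x) for all x ∈ [0,1]. -/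
open Set

lemma max_bound_s12 (u : ℝ → ℝ) (M : ℝ)
    (h1 : ∀ x ∈ Icc (0 : ℝ) 1, DifferentiableAt ℝ u x)
    (h2 : ∀ x ∈ Icc (0 : ℝ) 1, M < u x → 0 < deriv (deriv u) x)
    (h0 : u 0 ≤ M) (h1' : u 1 ≤ M) : ∀ x ∈ Icc (0 : ℝ) 1, u x ≤ M := by
  have hc : ContinuousOn u (Icc 0 1) := fun x hx => (h1 x hx).continuousAt.continuousWithinAt
  obtain ⟨z, hz, hmax⟩ := isCompact_Icc.exists_isMaxOn (nonempty_Icc.2 zero_le_one) hc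
  intro x hx
  refine le_trans (hmax hx) ?_
  by_contra hM
  push Not at hM
  have hz0 : 0 < z := lt_of_le_of_ne hz.1 (by rintro rfl; linarith)
  have hz1 : z < 1 := lt_of_le_of_ne hz.2 (by rintro rfl; linarith)
  have hloc : IsLocalMax u z := hmax.isLocalMax (Icc_mem_nhds hz0 hz1)
  have hpos := h2 z hz hM
  have hmin : IsLocalMin u z :=
    isLocalMin_of_deriv_deriv_pos hpos hloc.deriv_eq_zero (h1 z hz).continuousAt
  have heq : u =ᶠ[nhds z] fun _ => u z := by
    filter_upwards [hloc, hmin] with y a b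
    exact le_antisymm a b
  have := heq.deriv.deriv_eq
  simp at this
  linarith

theorem statement12 (α A B : ℝ) (hα : 0 < α)
    (f : ℝ → ℝ → ℝ)
    (hf : ContDiff ℝ 1 (Function.uncurry f))
    (hfu : ∀ x ∈ Icc (0 : ℝ) 1, ∀ s : ℝ, α ≤ deriv (fun t => f x t) s) :
    ∃ C > (0 : ℝ), ∀ ε ∈ Ioc (0 : ℝ) 1,
      ∀ u : ℝ → ℝ,
        (∀ x ∈ Icc (0 : ℝ) 1, DifferentiableAt ℝ u x) →
        (∀ x ∈ Icc (0 : ℝ) 1, DifferentiableAt ℝ (deriv u) x) →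
        (∀ x ∈ Icc (0 : ℝ) 1,
          (ε + x) ^ 2 * deriv (deriv u) x - f x (u x) = 0) →
        u 0 = A → u 1 = B →
        ∀ x ∈ Icc (0 : ℝ) 1, |deriv u x| ≤ C / (ε + x) := by
  have hd : ∀ x, Differentiable ℝ (fun t => f x t) := fun x =>
    (hf.differentiable (by norm_num)).comp
      (f := fun t : ℝ => (x, t)) ((differentiable_const x).prodMk differentiable_id)
  have hmono : ∀ x ∈ Icc (0 : ℝ) 1, ∀ s t : ℝ, s ≤ t → α * (t - s) ≤ f x t - f x s := by
    intro x hx s t hst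
    exact mul_sub_le_image_sub_of_le_deriv (hd x) (hfu x hx) hst
  obtain ⟨F, hF⟩ := (isCompact_Icc (a := (0 : ℝ)) (b := 1)).exists_bound_of_continuousOn
    (f := fun x => f x 0)
    ((hf.continuous.comp (f := fun t : ℝ => (t, (0 : ℝ))) (by fun_prop)).continuousOn)
  have hF0 : 0 ≤ F := le_trans (norm_nonneg _) (hF 0 (by simp))
  obtain ⟨M, hM⟩ : ∃ M, M = |A| + |B| + F / α := ⟨_, rfl⟩
  have hFα : 0 ≤ F / α := by positivity
  have hM0 : 0 ≤ M := by rw [hM]; positivity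
  have hFM : F ≤ α * M := by
    have : α * (F / α) = F := by field_simp
    rw [hM]
    nlinarith [abs_nonneg A, abs_nonneg B, mul_nonneg hα.le (abs_nonneg A),
      mul_nonneg hα.le (abs_nonneg B)]
  obtain ⟨K, hK⟩ := ((isCompact_Icc (a := (0 : ℝ)) (b := 1)).prod
    (isCompact_Icc (a := -M) (b := M))).exists_bound_of_continuousOn hf.continuous.continuousOn
  have hK0 : 0 ≤ K := le_trans (norm_nonneg _) (hK (0, 0) (by simp [hM0]))
  refine ⟨8 * M + K + 1, by linarith, ?_⟩
  rintro ε ⟨hε, hε1⟩ u hu1 hu2 hode hA hB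
  have hup : ∀ x ∈ Icc (0 : ℝ) 1, u x ≤ M := by
    apply max_bound_s12 u M hu1
    · intro x hx hMx
      have e := hode x hx
      have h1 := hmono x hx 0 (u x) (by linarith)
      have h2 := neg_le_of_abs_le (hF x hx)
      have h3 : 0 < (ε + x) ^ 2 * deriv (deriv u) x := by nlinarith
      exact pos_of_mul_pos_right h3 (sq_nonneg _)
    · linarith [le_abs_self A, abs_nonneg B]
    · linarith [le_abs_self B, abs_nonneg A]
  have hlo : ∀ x ∈ Icc (0 : ℝ) 1, -u x ≤ M := by
    have hdd : deriv (deriv (fun x => -u x)) = fun x => -deriv (deriv u) x := by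
      have : deriv (fun x => -u x) = fun x => -deriv u x := by
        funext x; simp
      rw [this]; funext x; simp
    apply max_bound_s12 (fun x => -u x) M (fun x hx => (hu1 x hx).fun_neg)
    · intro x hx hMx
      have e := hode x hx
      have h1 := hmono x hx (u x) 0 (by linarith)
      have h2 := le_of_abs_le (hF x hx)
      rw [hdd]
      have h3 : 0 < (ε + x) ^ 2 * (-deriv (deriv u) x) := by nlinarith
      exact pos_of_mul_pos_right h3 (sq_nonneg _)
    · linarith [neg_abs_le A, abs_nonneg B]
    · linarith [neg_abs_le B, abs_nonneg A]
  have hKu : ∀ x ∈ Icc (0 : ℝ) 1, (ε + x) ^ 2 * |deriv (deriv u) x| ≤ K := by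
    intro x hx
    have h := hK (x, u x) ⟨hx, by linarith [hlo x hx], hup x hx⟩
    have e : f x (u x) = (ε + x) ^ 2 * deriv (deriv u) x := by linarith [hode x hx]
    simp only [Function.uncurry, e, Real.norm_eq_abs, abs_mul, abs_sq] at h
    exact h
  intro x hx
  have hp : 0 < ε + x := by linarith [hx.1]
  obtain ⟨a, b, ha, hb, hab, hax, hxb, hax'⟩ : ∃ a b : ℝ, 0 ≤ a ∧ b ≤ 1 ∧
      b - a = (ε + x) / 4 ∧ a ≤ x ∧ x ≤ b ∧ 3 / 4 * (ε + x) ≤ ε + a := by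
    rcases le_total x (1 / 2) with h | h
    · exact ⟨x, x + (ε + x) / 4, hx.1, by linarith, by ring, le_rfl, by linarith, by linarith⟩
    · exact ⟨x - (ε + x) / 4, x, by linarith, hx.2, by ring, by linarith, le_rfl, by linarith⟩
  have hsub : Icc a b ⊆ Icc (0 : ℝ) 1 := Icc_subset_Icc ha hb
  have hlt : a < b := by linarith
  obtain ⟨ξ, hξ, hξe⟩ := exists_deriv_eq_slope u hlt
    (fun y hy => (hu1 y (hsub hy)).continuousAt.continuousWithinAt)
    (fun y hy => (hu1 y (hsub (Ioo_subset_Icc_self hy))).differentiableWithinAt)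
  have haI := hsub (left_mem_Icc.2 hlt.le)
  have hbI := hsub (right_mem_Icc.2 hlt.le)
  have hξ1 : |deriv u ξ| ≤ 8 * M / (ε + x) := by
    rw [hξe, hab, abs_div, abs_of_pos (by linarith : 0 < (ε + x) / 4),
      div_le_div_iff₀ (by linarith) hp]
    have : |u b - u a| ≤ 2 * M := by
      rw [abs_le]
      constructor <;> linarith [hlo a haI, hup a haI, hlo b hbI, hup b hbI]
    nlinarith
  have hbd : ∀ y ∈ Icc a b, ‖deriv (deriv u) y‖ ≤ 4 * K / (ε + x) ^ 2 := by
    intro y hy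
    rw [Real.norm_eq_abs, le_div_iff₀ (by positivity)]
    have h := hKu y (hsub hy)
    have h1 : (3 / 4 * (ε + x)) ^ 2 ≤ (ε + y) ^ 2 := by
      apply pow_le_pow_left₀ (by positivity)
      linarith [hy.1]
    nlinarith [abs_nonneg (deriv (deriv u) y), mul_le_mul_of_nonneg_right h1
      (abs_nonneg (deriv (deriv u) y)), mul_nonneg (sq_nonneg (ε + x)) (abs_nonneg (deriv (deriv u) y))]
  have hdiff := (convex_Icc a b).norm_image_sub_le_of_norm_deriv_le
    (fun y hy => hu2 y (hsub hy)) hbd (Ioo_subset_Icc_self hξ) (⟨hax, hxb⟩ : x ∈ Icc a b)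
  rw [Real.norm_eq_abs, Real.norm_eq_abs] at hdiff
  have hxξ : |x - ξ| ≤ (ε + x) / 4 := by
    rw [abs_le]
    constructor <;> linarith [hξ.1, hξ.2]
  have h4 : 4 * K / (ε + x) ^ 2 * |x - ξ| ≤ K / (ε + x) := by
    calc _ ≤ 4 * K / (ε + x) ^ 2 * ((ε + x) / 4) := by gcongr
      _ = K / (ε + x) := by field_simp
  have h5 : |deriv u x| ≤ |deriv u x - deriv u ξ| + |deriv u ξ| := by
    simpa using abs_add_le (deriv u x - deriv u ξ) (deriv u ξ)
  have h6 : (8 * M + K + 1) / (ε + x) = 8 * M / (ε + x) + K / (ε + x) + 1 / (ε + x) := by ring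
  have h7 : 0 ≤ 1 / (ε + x) := by positivity
  linarith
end

section
/- For the mesh x_n = ε[(1 + 1/ε)^{n/N} − 1] with step sizes h_n = x_n − x_{n−1}, the sequence h_1, h_2, …, h_N is strictly increasing, and the largest step satisfies h_N ≤ (1 + ε) (1/N) ln(1 + 1/ε); in particular, for ε ∈ (0,1], h_N ≤ (2/N) ln(1 + 1/ε). -/
open Set

/-- For the mesh `x_n = ε ((1 + 1/ε)^{n/N} - 1)` with steps `h_n = x_n - x_{n-1}`,
the steps are strictly increasing and the largest step satisfies
`h_N ≤ (1 + ε) (1/N) ln (1 + 1/ε)`; in particular for `ε ≤ 1`,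
`h_N ≤ (2/N) ln (1 + 1/ε)`. -/
theorem statement14 (ε : ℝ) (hε : 0 < ε) (N : ℕ) (hN : 1 ≤ N) :
    ∀ x h : ℕ → ℝ,
      (∀ n : ℕ, x n = ε * ((1 + 1 / ε) ^ ((n : ℝ) / (N : ℝ)) - 1)) →
      (∀ n : ℕ, 1 ≤ n → h n = x n - x (n - 1)) →
      (∀ n : ℕ, 1 ≤ n → n < N → h n < h (n + 1)) ∧
      h N ≤ (1 + ε) * (1 / N) * Real.log (1 + 1 / ε) ∧
      (ε ≤ 1 → h N ≤ (2 / N) * Real.log (1 + 1 / ε)) := by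
  intro x h hx hh
  have hNpos : (0 : ℝ) < N := by exact_mod_cast hN
  have ha : 1 < 1 + 1 / ε := by
    have : 0 < 1 / ε := by positivity
    linarith
  have hεa : ε * (1 + 1 / ε) = 1 + ε := by field_simp; ring
  generalize 1 + 1 / ε = a at *
  have ha0 : 0 < a := by linarith
  obtain ⟨q, hq⟩ : ∃ q : ℝ, q = a ^ (1 / (N : ℝ)) := ⟨_, rfl⟩
  have hq1 : 1 < q := by
    rw [hq]; exact Real.one_lt_rpow ha (by positivity)
  have hq0 : 0 < q := by linarith
  have hpow : ∀ n : ℕ, a ^ ((n : ℝ) / (N : ℝ)) = q ^ n := by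
    intro n
    rw [hq, ← Real.rpow_natCast, ← Real.rpow_mul ha0.le]
    congr 1
    ring
  have hstep : ∀ m : ℕ, h (m + 1) = ε * q ^ m * (q - 1) := by
    intro m
    rw [hh (m + 1) (by omega), Nat.add_sub_cancel, hx, hx, hpow, hpow]
    ring
  have hlogq : Real.log q = 1 / N * Real.log a := by
    rw [hq, Real.log_rpow ha0]
  have hqN : q ^ N = a := by
    rw [← hpow, div_self hNpos.ne', Real.rpow_one]
  have hmain : h N ≤ (1 + ε) * (1 / N) * Real.log a := by
    rw [mul_assoc, ← hlogq, ← hεa, ← hqN]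
    obtain ⟨m, rfl⟩ : ∃ m, N = m + 1 := ⟨N - 1, by omega⟩
    rw [hstep]
    have h1 := Real.one_sub_inv_le_log_of_pos hq0
    have h2 : ε * q ^ m * (q - 1) = ε * q ^ (m + 1) * (1 - q⁻¹) := by
      field_simp
      ring
    rw [h2]
    exact mul_le_mul_of_nonneg_left h1 (by positivity)
  refine ⟨?_, hmain, ?_⟩
  · intro n hn _
    obtain ⟨m, rfl⟩ : ∃ m, n = m + 1 := ⟨n - 1, by omega⟩
    rw [hstep, hstep]
    have h3 : q ^ m < q ^ (m + 1) := pow_lt_pow_right₀ hq1 (by omega)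
    have h4 : 0 < q - 1 := by linarith
    gcongr
  · intro hε1
    refine hmain.trans ?_
    have hl : 0 ≤ Real.log a := Real.log_nonneg ha.le
    refine mul_le_mul_of_nonneg_right ?_ hl
    rw [mul_one_div]
    gcongr
    linarith
end

section
/- Let v : [0,1] → ℝ be differentiable with |v'(x)| ≤ C₂/(ε + x) for all x ∈ [0,1], and suppose f : [0,1] × ℝ → ℝ is continuously differentiable with |∂f/∂x| ≤ C and |∂f/∂u| ≤ C₁ on the relevant bounded region. Then for any 0 ≤ x_{n−1} ≤ x ≤ x_n ≤ 1, |f(x, v(x)) − f(x_{n−1}, v(x_{n−1}))| ≤ C (x_n − x_{n−1}) + C₁ C₂ ln((ε + x_n)/(ε + x_{n−1})). -/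
open Set

/-- Estimate of the frozen-coefficient error: if `|v' x| ≤ C₂/(ε + x)`,
`|∂f/∂x| ≤ C` and `|∂f/∂u| ≤ C₁`, then for `0 ≤ x_{n-1} ≤ x ≤ x_n ≤ 1`,
`|f (x, v x) - f (x_{n-1}, v x_{n-1})| ≤ C (x_n - x_{n-1}) + C₁ C₂ ln ((ε + x_n)/(ε + x_{n-1}))`. -/
theorem statement15 (ε C C₁ C₂ : ℝ) (hε : ε ∈ Ioc (0 : ℝ) 1)
    (f : ℝ → ℝ → ℝ)
    (hf : ContDiff ℝ 1 (Function.uncurry f))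
    (hfx : ∀ x ∈ Icc (0 : ℝ) 1, ∀ s : ℝ, |deriv (fun t => f t s) x| ≤ C)
    (hfu : ∀ x ∈ Icc (0 : ℝ) 1, ∀ s : ℝ, |deriv (fun t => f x t) s| ≤ C₁)
    (v : ℝ → ℝ)
    (hv : ∀ x ∈ Icc (0 : ℝ) 1, DifferentiableAt ℝ v x)
    (hv' : ∀ x ∈ Icc (0 : ℝ) 1, |deriv v x| ≤ C₂ / (ε + x)) :
    ∀ xnm x xn : ℝ, 0 ≤ xnm → xnm ≤ x → x ≤ xn → xn ≤ 1 →
      |f x (v x) - f xnm (v xnm)| ≤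
        C * (xn - xnm) + C₁ * C₂ * Real.log ((ε + xn) / (ε + xnm)) := by
  intro a x b ha hax hxb hb
  obtain ⟨hε0, hε1⟩ := hε
  have hfd : Differentiable ℝ (Function.uncurry f) := hf.differentiable (by norm_num)
  have hC : 0 ≤ C := (abs_nonneg _).trans (hfx 0 (by simp) 0)
  have hC1 : 0 ≤ C₁ := (abs_nonneg _).trans (hfu 0 (by simp) 0)
  have hC2 : 0 ≤ C₂ := by
    have h := (abs_nonneg _).trans (hv' 0 (by simp))
    rw [add_zero] at h
    have h2 := mul_nonneg h hε0.le
    rwa [div_mul_cancel₀ _ hε0.ne'] at h2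
  have hx1 : x ∈ Icc (0 : ℝ) 1 := ⟨by linarith, by linarith⟩
  have h1 : |f x (v x) - f x (v a)| ≤ C₁ * |v x - v a| := by
    have h := (convex_univ (𝕜 := ℝ) (E := ℝ)).norm_image_sub_le_of_norm_deriv_le
      (f := fun t => f x t) (C := C₁) (x := v a) (y := v x)
      (fun t _ => by
        have : Differentiable ℝ (fun t => Function.uncurry f (x, t)) := by fun_prop
        exact this t)
      (fun t _ => hfu x hx1 t) (mem_univ _) (mem_univ _)
    simpa [Real.norm_eq_abs] using h
  have h2 : |f x (v a) - f a (v a)| ≤ C * (x - a) := by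
    have h := (convex_Icc (0 : ℝ) 1).norm_image_sub_le_of_norm_deriv_le
      (f := fun t => f t (v a)) (C := C) (x := a) (y := x)
      (fun t _ => by
        have : Differentiable ℝ (fun t => Function.uncurry f (t, v a)) := by fun_prop
        exact this t)
      (fun t ht => hfx t ht _) ⟨ha, by linarith⟩ hx1
    simpa [Real.norm_eq_abs, abs_of_nonneg (sub_nonneg.2 hax)] using h
  have h3 : |v x - v a| ≤ C₂ * (Real.log (ε + x) - Real.log (ε + a)) := by
    have hin : ∀ t ∈ Icc a x, t ∈ Icc (0 : ℝ) 1 := fun t ht =>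
      ⟨ha.trans ht.1, ht.2.trans hx1.2⟩
    have hB : ∀ t ∈ Icc a x, HasDerivAt
        (fun t => C₂ * (Real.log (ε + t) - Real.log (ε + a))) (C₂ / (ε + t)) t := by
      intro t ht
      have hp : ε + t ≠ 0 := by have := (hin t ht).1; positivity
      have := ((((hasDerivAt_id t).const_add ε).log hp).sub_const
        (Real.log (ε + a))).const_mul C₂
      have e : C₂ / (ε + t) = C₂ * (1 / (ε + t)) := by ring
      rw [e]
      exact this
    have h := image_norm_le_of_norm_deriv_right_le_deriv_boundary'
      (f := fun t => v t - v a) (f' := deriv v)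
      (B := fun t => C₂ * (Real.log (ε + t) - Real.log (ε + a)))
      (B' := fun t => C₂ / (ε + t)) (a := a) (b := x)
      (fun t ht => ((hv t (hin t ht)).continuousAt.sub continuousAt_const).continuousWithinAt)
      (fun t ht => ((hv t (hin t (Ico_subset_Icc_self ht))).hasDerivAt.sub_const
        (v a)).hasDerivWithinAt)
      (by simp)
      (fun t ht => (hB t ht).continuousAt.continuousWithinAt)
      (fun t ht => (hB t (Ico_subset_Icc_self ht)).hasDerivWithinAt)
      (fun t ht => hv' t (hin t (Ico_subset_Icc_self ht)))
      (right_mem_Icc.2 hax)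
    exact h
  have h4 : Real.log (ε + x) ≤ Real.log (ε + b) :=
    Real.log_le_log (by linarith) (by linarith)
  rw [Real.log_div (by linarith) (by linarith)]
  calc |f x (v x) - f a (v a)| ≤ |f x (v x) - f x (v a)| + |f x (v a) - f a (v a)| :=
        abs_sub_le _ _ _
    _ ≤ C₁ * (C₂ * (Real.log (ε + b) - Real.log (ε + a))) + C * (b - a) := by
        refine add_le_add (h1.trans (mul_le_mul_of_nonneg_left (h3.trans ?_) hC1))
          (h2.trans ?_)
        · gcongr
        · gcongr
    _ = _ := by ring
end
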